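/- arXiv:1108.2801 — 2 statements merged into one kernel-verified Lean document; each statement's English description precedes it below -/
import Mathlib

section
/- Let P be an attracting petal for f (f maps P injectively into itself, all orbits in P converge to 0, and no point of P has an infinite backward orbit in P), and let C_A = P \ f(P) be the fundamental crescent. Then every point of P lies on the forward orbit of a unique point of C_A: every z ∈ P satisfies fⁿ(z₀) = z for some z₀ ∈ C_A and n ≥ 0, and distinct points of C_A have disjoint forward orbits. -/
/-- Fundamental crescent: if `f` is injective on an attracting petal `P`, maps
`P` into itself, all orbits in `P` converge to `0`, and no point of `P` has an
infinite backward orbit in `P`, then every point of `P` lies on the forward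
orbit of a point of the crescent `C = P \ f(P)`, and distinct points of `C` have
disjoint forward orbits. -/
theorem stmt16 (f : ℂ → ℂ) (P : Set ℂ)
    (hinj : Set.InjOn f P) (hmaps : Set.MapsTo f P P)
    (hconv : ∀ z ∈ P, Filter.Tendsto (fun n => f^[n] z) Filter.atTop (nhds 0))
    (hback : ∀ z ∈ P,
      ¬ ∃ w : ℕ → ℂ, w 0 = z ∧ (∀ n, w n ∈ P) ∧ ∀ n, f (w (n + 1)) = w n) :
    (∀ z ∈ P, ∃ z₀ ∈ P \ (f '' P), ∃ n : ℕ, f^[n] z₀ = z) ∧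
    (∀ z₁ ∈ P \ (f '' P), ∀ z₂ ∈ P \ (f '' P), z₁ ≠ z₂ →
      ∀ m k : ℕ, f^[m] z₁ ≠ f^[k] z₂) := by
  constructor
  · intro z hz
    by_contra hcon
    have key : ∀ x : {x : ℂ // x ∈ P ∧ ∃ n : ℕ, f^[n] x = z},
        ∃ y : {x : ℂ // x ∈ P ∧ ∃ n : ℕ, f^[n] x = z}, f y.1 = x.1 := by
      rintro ⟨x, hx, n, hn⟩
      by_cases hxi : x ∈ f '' P
      · obtain ⟨y, hy, rfl⟩ := hxi
        exact ⟨⟨y, hy, n + 1, by rw [Function.iterate_succ_apply]; exact hn⟩, rfl⟩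
      · exact absurd ⟨x, ⟨hx, hxi⟩, n, hn⟩ hcon
    choose g hg using key
    refine hback z hz ⟨fun n => (g^[n] ⟨z, hz, 0, rfl⟩).1, rfl,
      fun n => (g^[n] ⟨z, hz, 0, rfl⟩).2.1, fun n => ?_⟩
    simp only [Function.iterate_succ_apply']
    exact hg _
  · intro z₁ h₁ z₂ h₂ hne m
    induction m with
    | zero =>
      intro k h
      cases k with
      | zero => exact hne h
      | succ k =>
        rw [Function.iterate_succ_apply'] at h
        exact h₁.2 ⟨_, hmaps.iterate k h₂.1, h.symm⟩
    | succ m ih =>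
      intro k h
      rw [Function.iterate_succ_apply'] at h
      cases k with
      | zero => exact h₂.2 ⟨_, hmaps.iterate m h₁.1, h⟩
      | succ k =>
        rw [Function.iterate_succ_apply'] at h
        exact ih k (hinj (hmaps.iterate m h₁.1) (hmaps.iterate k h₂.1) h)
end

section
/- Let φ₁ and φ₂ be two attracting Fatou coordinates on an attracting petal P of a simple parabolic germ f (i.e., univalent analytic functions with φᵢ(f(z)) = φᵢ(z) + 1 on P, each inducing a conformal isomorphism of the orbit-space cylinder with ℂ/ℤ). Then φ₂ - φ₁ is constant on P. -/
open Filter Topology Set in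
lemma descend_diff (φ ψ H : ℂ → ℂ) (P : Set ℂ) (hP : IsOpen P) (hφ : DifferentiableOn ℂ φ P)
    (hψ : DifferentiableOn ℂ ψ P) (hinj : Set.InjOn φ P) (h : ∀ z ∈ P, H (φ z) = ψ z)
    (z : ℂ) (hz : z ∈ P) : DifferentiableAt ℂ H (φ z) := by
  have hnz : P ∈ 𝓝 z := hP.mem_nhds hz
  have han : AnalyticAt ℂ φ z := hφ.analyticAt hnz
  have hnc : ¬ ∀ᶠ y in 𝓝 z, φ y = φ z := by
    intro hc
    have h1 : ∀ᶠ y in 𝓝[≠] z, False := by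
      filter_upwards [nhdsWithin_le_nhds hc, nhdsWithin_le_nhds hnz, self_mem_nhdsWithin]
        with y hy hyP hne
      exact hne (hinj hyP hz hy)
    exact (h1.exists).elim fun _ h => h
  have hopen := han.eventually_constant_or_nhds_le_map_nhds.resolve_left hnc
  have hcont : ContinuousAt H (φ z) := by
    have h1 : Tendsto H (map φ (𝓝 z)) (𝓝 (H (φ z))) := by
      rw [tendsto_map'_iff, h z hz]
      refine ((hψ.differentiableAt hnz).continuousAt.tendsto).congr' ?_
      filter_upwards [hnz] with y hy
      exact (h y hy).symm
    exact h1.mono_left hopen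
  -- noncritical points
  have hreg : ∀ y ∈ P, deriv φ y ≠ 0 → DifferentiableAt ℂ H (φ y) := by
    intro y hy hd
    have hny : P ∈ 𝓝 y := hP.mem_nhds hy
    have hs : HasStrictDerivAt φ (deriv φ y) y := (hφ.analyticAt hny).hasStrictDerivAt
    have hli := (hs.to_localInverse hd).hasDerivAt.differentiableAt
    have hfx : hs.localInverse φ _ y hd (φ y) = y :=
      HasStrictFDerivAt.localInverse_apply_image _
    have hev : H =ᶠ[𝓝 (φ y)] fun w => ψ (hs.localInverse φ _ y hd w) := by
      have h1 : ∀ᶠ w in 𝓝 (φ y), φ (hs.localInverse φ _ y hd w) = w :=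
        HasStrictFDerivAt.eventually_right_inverse _
      have h2 : ∀ᶠ w in 𝓝 (φ y), hs.localInverse φ _ y hd w ∈ P :=
        hli.continuousAt.tendsto.eventually_mem (by rw [hfx]; exact hny)
      filter_upwards [h1, h2] with w hw1 hw2
      rw [← h _ hw2, hw1]
    refine DifferentiableAt.congr_of_eventuallyEq ?_ hev
    refine DifferentiableAt.comp (g := ψ) (φ y) ?_ hli
    rw [hfx]
    exact hψ.differentiableAt hny
  have hd : ∀ᶠ y in 𝓝[≠] z, deriv φ y ≠ 0 := by
    refine han.deriv.eventually_eq_zero_or_eventually_ne_zero.resolve_left ?_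
    intro h0
    apply hnc
    obtain ⟨r, hr, hball⟩ := Metric.eventually_nhds_iff_ball.1 (h0.and hnz)
    filter_upwards [Metric.ball_mem_nhds z hr] with y hy
    exact (convex_ball z r).is_const_of_fderivWithin_eq_zero (𝕜 := ℂ) (f := φ)
      (hφ.mono fun y hy => (hball y hy).2)
      (fun y hy => by
        rw [fderivWithin_of_isOpen Metric.isOpen_ball hy]
        ext
        simpa using (hball y hy).1) hy (Metric.mem_ball_self hr)
  refine (Complex.analyticAt_of_differentiable_on_punctured_nhds_of_continuousAt ?_
    hcont).differentiableAt
  rw [eventually_nhdsWithin_iff] at hd ⊢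
  refine hopen ?_
  show ∀ᶠ y in 𝓝 z, φ y ∈ ({φ z}ᶜ : Set ℂ) → DifferentiableAt ℂ H (φ y)
  filter_upwards [hd, hnz] with y hy hyP hne
  exact hreg y hyP (hy fun h => hne (by rw [mem_singleton_iff.1 h]; rfl))

open Filter Topology Set in
lemma entire_inv (H K : ℂ → ℂ) (hH : Differentiable ℂ H) (hK : Differentiable ℂ K)
    (hKH : ∀ w, K (H w) = w) (hper : ∀ w, H (w + 1) = H w + 1) (w : ℂ) : H w = w + H 0 := by
  have hinj : Function.Injective H := Function.LeftInverse.injective hKH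
  have hd0 : deriv H 0 ≠ 0 := by
    intro h0
    have h1 : HasDerivAt (fun w => K (H w)) (deriv K (H 0) * deriv H 0) 0 :=
      (hK (H 0)).hasDerivAt.comp 0 (hH 0).hasDerivAt
    have h2 : (fun w => K (H w)) = fun w => w := funext hKH
    rw [h2, h0, mul_zero] at h1
    exact zero_ne_one (h1.unique (hasDerivAt_id 0))
  have hDd : ∀ (F : ℂ → ℂ) (a : ℂ), Differentiable ℂ F → Differentiable ℂ (dslope F a) := by
    intro F a hF
    exact differentiableOn_univ.1
      ((Complex.differentiableOn_dslope univ_mem).2 hF.differentiableOn)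
  have hDmul : ∀ w, w * dslope H 0 w = H w - H 0 := by
    intro w; simpa using sub_smul_dslope H 0 w
  have hD0 : ∀ w, dslope H 0 w ≠ 0 := by
    intro w hw
    by_cases h : w = 0
    · subst h; rw [dslope_same] at hw; exact hd0 hw
    · have := hDmul w
      rw [hw, mul_zero] at this
      exact h (hinj (sub_eq_zero.1 this.symm))
  set g : ℂ → ℂ := fun w => (dslope H 0 w)⁻¹ with hg
  have hgd : Differentiable ℂ g := (hDd H 0 hH).inv hD0
  have hg1 : g 1 = 1 := by
    have h1 := hDmul 1
    have h2 := hper 0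
    rw [zero_add] at h2
    rw [h2] at h1
    have : dslope H 0 1 = 1 := by linear_combination h1
    simp [hg, this]
  have hg2 : g 2 = 1 := by
    have h1 := hDmul 2
    have h2 := hper 0
    have h3 := hper 1
    rw [zero_add] at h2
    rw [show (1 : ℂ) + 1 = 2 by norm_num] at h3
    rw [h3, h2] at h1
    have : dslope H 0 2 = 1 := by linear_combination h1 / 2
    simp [hg, this]
  have hkmul : ∀ w, (w - 1) * dslope g 1 w = g w - 1 := by
    intro w; have := sub_smul_dslope g 1 w; rwa [hg1] at this
  have hkd := hDd g 1 hgd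
  -- properness
  obtain ⟨R, hR⟩ := ((isCompact_closedBall (H 0) 1).image hK.continuous).isBounded.exists_norm_le
  have hbig : ∀ w, R < ‖w‖ → ‖g w‖ ≤ ‖w‖ := by
    intro w hw
    have h1 : 1 ≤ ‖H w - H 0‖ := by
      by_contra hlt
      have := hR w ⟨H w, by
        rw [Metric.mem_closedBall, dist_eq_norm]; exact (not_le.1 hlt).le, hKH w⟩
      linarith
    rw [← hDmul, norm_mul] at h1
    have hpos : 0 < ‖dslope H 0 w‖ := norm_pos_iff.2 (hD0 w)
    simp only [hg, norm_inv]
    rw [inv_le_iff_one_le_mul₀ hpos]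
    exact h1
  obtain ⟨C, hC⟩ := ((isCompact_closedBall (0 : ℂ) (max R 2)).image hkd.continuous).isBounded.exists_norm_le
  have hbd : Bornology.IsBounded (range (dslope g 1)) := by
    rw [isBounded_iff_forall_norm_le]
    refine ⟨max C 3, ?_⟩
    rintro _ ⟨w, rfl⟩
    by_cases hw : ‖w‖ ≤ max R 2
    · exact le_max_of_le_left (hC _ ⟨w, by simpa using hw, rfl⟩)
    · apply le_max_of_le_right
      obtain ⟨hw1, hw2⟩ := max_lt_iff.1 (not_le.1 hw)
      have h1 := congrArg norm (hkmul w)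
      rw [norm_mul] at h1
      have h2 : ‖g w - 1‖ ≤ ‖w‖ + 1 := (norm_sub_le _ _).trans (by simpa using hbig w hw1)
      have h3 : ‖w‖ - 1 ≤ ‖w - 1‖ := by simpa using norm_sub_norm_le w 1
      by_contra h4
      have h4 := not_le.1 h4
      nlinarith
  have hk2 : dslope g 1 2 = 0 := by
    have := hkmul 2
    rw [hg2] at this
    linear_combination this
  have hgw : g w = 1 := by
    have h1 := hkmul w
    rw [hkd.apply_eq_apply_of_bounded hbd w 2, hk2] at h1
    linear_combination -h1
  have hDw : dslope H 0 w = 1 := inv_eq_one.1 hgw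
  have := hDmul w
  rw [hDw] at this
  linear_combination -this

lemma exists_descent (φ₁ φ₂ : ℂ → ℂ) (P : Set ℂ) (hP : IsOpen P)
    (h1 : DifferentiableOn ℂ φ₁ P) (h2 : DifferentiableOn ℂ φ₂ P) (hinj1 : Set.InjOn φ₁ P)
    (hkey : ∀ z ∈ P, ∀ z' ∈ P, ∀ n : ℤ, φ₁ z = φ₁ z' + n → φ₂ z = φ₂ z' + n)
    (hsurj : ∀ w, ∃ z ∈ P, ∃ n : ℤ, w = φ₁ z + n) :
    ∃ H : ℂ → ℂ, Differentiable ℂ H ∧ ∀ z ∈ P, ∀ n : ℤ, H (φ₁ z + n) = φ₂ z + n := by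
  choose ζ hζ m hm using hsurj
  have hH : ∀ z ∈ P, ∀ n : ℤ, φ₂ (ζ (φ₁ z + n)) + m (φ₁ z + n) = φ₂ z + n := by
    intro z hz n
    have h := hkey _ (hζ (φ₁ z + n)) z hz (n - m (φ₁ z + n)) (by
      push_cast
      linear_combination -hm (φ₁ z + n))
    push_cast at h
    linear_combination h
  refine ⟨fun w => φ₂ (ζ w) + m w, ?_, hH⟩
  intro w
  have := descend_diff (fun z => φ₁ z + m w) (fun z => φ₂ z + m w) (fun w => φ₂ (ζ w) + m w) P hP
    (h1.add_const _) (h2.add_const _) (fun a ha b hb hab => hinj1 ha hb (add_right_cancel hab))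
    (fun z hz => hH z hz _) (ζ w) (hζ w)
  rwa [← hm w] at this

lemma abel_iterate (f φ : ℂ → ℂ) (P : Set ℂ) (hmaps : Set.MapsTo f P P)
    (hA : ∀ z ∈ P, φ (f z) = φ z + 1) (n : ℕ) : ∀ z ∈ P, φ (f^[n] z) = φ z + n := by
  induction n with
  | zero => simp
  | succ k ih =>
    intro z hz
    rw [Function.iterate_succ_apply, ih _ (hmaps hz), hA z hz]
    push_cast; ring

lemma exp_int (a b : ℂ) : Complex.exp (2 * Real.pi * Complex.I * a) =
    Complex.exp (2 * Real.pi * Complex.I * b) ↔ ∃ n : ℤ, a = b + n := by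
  rw [Complex.exp_eq_exp_iff_exists_int]
  refine exists_congr fun n => ?_
  rw [← mul_right_inj' Complex.two_pi_I_ne_zero (b := a)]
  constructor <;> intro h <;> linear_combination h

lemma key_of_orb (f φ₁ φ₂ : ℂ → ℂ) (P : Set ℂ) (hmaps : Set.MapsTo f P P)
    (hA1 : ∀ z ∈ P, φ₁ (f z) = φ₁ z + 1) (hA2 : ∀ z ∈ P, φ₂ (f z) = φ₂ z + 1)
    (horb1 : ∀ z₁ ∈ P, ∀ z₂ ∈ P,
      (Complex.exp (2 * Real.pi * Complex.I * φ₁ z₁) =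
          Complex.exp (2 * Real.pi * Complex.I * φ₁ z₂) ↔
        ∃ n : ℕ, f^[n] z₁ = z₂ ∨ f^[n] z₂ = z₁)) :
    ∀ z ∈ P, ∀ z' ∈ P, ∀ n : ℤ, φ₁ z = φ₁ z' + n → φ₂ z = φ₂ z' + n := by
  intro z hz z' hz' n hn
  obtain ⟨k, hk | hk⟩ := (horb1 z hz z' hz').1 ((exp_int _ _).2 ⟨n, hn⟩)
  · have e1 := abel_iterate f φ₁ P hmaps hA1 k z hz
    have e2 := abel_iterate f φ₂ P hmaps hA2 k z hz
    rw [hk] at e1 e2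
    linear_combination hn + e1 - e2
  · have e1 := abel_iterate f φ₁ P hmaps hA1 k z' hz'
    have e2 := abel_iterate f φ₂ P hmaps hA2 k z' hz'
    rw [hk] at e1 e2
    linear_combination hn - e1 + e2

lemma surj_of_exp (φ : ℂ → ℂ) (P : Set ℂ)
    (hsurj : ∀ w : ℂ, w ≠ 0 → ∃ z ∈ P, Complex.exp (2 * Real.pi * Complex.I * φ z) = w) :
    ∀ w, ∃ z ∈ P, ∃ n : ℤ, w = φ z + n := by
  intro w
  obtain ⟨z, hz, h⟩ := hsurj _ (Complex.exp_ne_zero (2 * Real.pi * Complex.I * w))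
  exact ⟨z, hz, (exp_int _ _).1 h.symm⟩


/-- Uniqueness of Fatou coordinates: two attracting Fatou coordinates `φ₁, φ₂`
on an attracting petal `P` of a simple parabolic germ (univalent, satisfying the
Abel equation, each inducing a conformal isomorphism of the orbit cylinder with
`ℂ/ℤ`, i.e. `exp(2πi φᵢ)` is surjective onto `ℂ*` and identifies exactly the
orbit relation) differ by a constant. -/
theorem stmt17 (f φ₁ φ₂ : ℂ → ℂ) (P : Set ℂ)
    (hP : IsOpen P) (hPconn : IsConnected P)
    (hmaps : Set.MapsTo f P P) (hfinj : Set.InjOn f P)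
    (h1 : DifferentiableOn ℂ φ₁ P) (h2 : DifferentiableOn ℂ φ₂ P)
    (hinj1 : Set.InjOn φ₁ P) (hinj2 : Set.InjOn φ₂ P)
    (hA1 : ∀ z ∈ P, φ₁ (f z) = φ₁ z + 1) (hA2 : ∀ z ∈ P, φ₂ (f z) = φ₂ z + 1)
    (hsurj1 : ∀ w : ℂ, w ≠ 0 →
      ∃ z ∈ P, Complex.exp (2 * Real.pi * Complex.I * φ₁ z) = w)
    (hsurj2 : ∀ w : ℂ, w ≠ 0 →
      ∃ z ∈ P, Complex.exp (2 * Real.pi * Complex.I * φ₂ z) = w)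
    (horb1 : ∀ z₁ ∈ P, ∀ z₂ ∈ P,
      (Complex.exp (2 * Real.pi * Complex.I * φ₁ z₁) =
          Complex.exp (2 * Real.pi * Complex.I * φ₁ z₂) ↔
        ∃ n : ℕ, f^[n] z₁ = z₂ ∨ f^[n] z₂ = z₁))
    (horb2 : ∀ z₁ ∈ P, ∀ z₂ ∈ P,
      (Complex.exp (2 * Real.pi * Complex.I * φ₂ z₁) =
          Complex.exp (2 * Real.pi * Complex.I * φ₂ z₂) ↔
        ∃ n : ℕ, f^[n] z₁ = z₂ ∨ f^[n] z₂ = z₁)) :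
    ∃ c : ℂ, ∀ z ∈ P, φ₂ z = φ₁ z + c := by
  have s1 := surj_of_exp φ₁ P hsurj1
  have s2 := surj_of_exp φ₂ P hsurj2
  obtain ⟨H, hHd, hH⟩ := exists_descent φ₁ φ₂ P hP h1 h2 hinj1
    (key_of_orb f φ₁ φ₂ P hmaps hA1 hA2 horb1) s1
  obtain ⟨K, hKd, hK⟩ := exists_descent φ₂ φ₁ P hP h2 h1 hinj2
    (key_of_orb f φ₂ φ₁ P hmaps hA2 hA1 horb2) s2
  have hKH : ∀ w, K (H w) = w := by
    intro w
    obtain ⟨z, hz, n, rfl⟩ := s1 w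
    rw [hH z hz, hK z hz]
  have hper : ∀ w, H (w + 1) = H w + 1 := by
    intro w
    obtain ⟨z, hz, n, rfl⟩ := s1 w
    have := hH z hz (n + 1)
    push_cast at this
    rw [add_assoc, this, hH z hz]; ring
  refine ⟨H 0, fun z hz => ?_⟩
  have e := hH z hz 0
  simp only [Int.cast_zero, add_zero] at e
  rw [← e]
  exact entire_inv H K hHd hKd hKH hper (φ₁ z)
end
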